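/- arXiv:2405.03186 — 5 statements merged into one kernel-verified Lean document; each statement's English description precedes it below -/
import Mathlib

section
/- Let D be a positive integer, let a be an integer with gcd(a,D)=1, and let χ₀ be the principal Dirichlet character (mod D). Then for every positive integer n one has χ₀(n)·e(-an/D) = (1/φ(D)) · Σ_{χ (mod D)} μ(D/f_χ) · χ*(a) · conj(χ*(D/f_χ)) · conj(τ(χ*)) · χ(n), where the sum runs over all Dirichlet characters χ modulo D. -/
/-!
For `(an, D) = 1`, expanding the function `b ↦ e(-b/D)` on `(ℤ/D)ˣ` in characters gives
`e(-an/D) = φ(D)⁻¹ ∑_χ χ(an) conj(τ(χ))`, where `τ(χ)` is the Gauss sum of the possibly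
imprimitive character `χ` (`sum_char_mul_conj_gaussSumOf`). The result follows from the classical
evaluation `τ(χ) = μ(D/f) χ*(D/f) τ(χ*)` (`gaussSumOf_eq_primitive`).

To prove that evaluation, the condition `(b, D) = 1` is removed by Möbius inversion, which writes
`τ(χ)` as `∑_{d ∣ D} μ(d) χ*(d) ∑_{c < D/d} χ*(c) e(c/(D/d))`. A term with `χ*(d) ≠ 0` has
`(d, f) = 1`, so `D/d = f m` for some `m`; the inner sum then contains the factor
`∑_{q < m} e(q/m)`, which vanishes unless `m = 1`, that is `d = D/f`
(`sum_range_mul_char_mul_e`).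
-/

/-- `e x = exp(2πix)`. -/
noncomputable def e (x : ℝ) : ℂ := Complex.exp (2 * Real.pi * Complex.I * x)

/-- The Gauss sum `τ(ψ) = ∑_{b mod N} ψ(b) e(b/N)` of a Dirichlet character `ψ (mod N)`. -/
noncomputable def gaussSumOf {N : ℕ} (ψ : DirichletCharacter ℂ N) : ℂ :=
  ∑ b ∈ Finset.range N, ψ (b : ZMod N) * e ((b : ℝ) / N)

lemma e_add (x y : ℝ) : e (x + y) = e x * e y := by
  simp only [e, ← Complex.exp_add]
  congr 1
  push_cast
  ring

lemma e_int (k : ℤ) : e k = 1 := by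
  rw [e, Complex.exp_eq_one_iff]
  exact ⟨k, by push_cast; ring⟩

lemma conj_e (x : ℝ) : (starRingEnd ℂ) (e x) = e (-x) := by
  simp only [e, ← Complex.exp_conj]
  congr 1
  simp [Complex.conj_ofNat]

lemma sum_e_div {m : ℕ} (hm : 1 < m) : ∑ q ∈ Finset.range m, e ((q : ℝ) / m) = 0 := by
  rw [← (Complex.isPrimitiveRoot_exp m (by omega)).geom_sum_eq_zero hm]
  refine Finset.sum_congr rfl fun q _ => ?_
  rw [e, ← Complex.exp_nat_mul]
  congr 1
  push_cast
  ring

lemma sum_range_mul_eq (f m : ℕ) (g : ℕ → ℂ) :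
    ∑ c ∈ Finset.range (f * m), g c =
      ∑ q ∈ Finset.range m, ∑ r ∈ Finset.range f, g (f * q + r) := by
  induction m with
  | zero => simp
  | succ m ih => rw [Nat.mul_succ, Finset.sum_range_add, ih, Finset.sum_range_succ]

/-- Summing a character modulo `f` against `e(c/(fm))` over a period `fm` yields the Gauss sum when
`m = 1`, and cancels otherwise because the class of `c` modulo `f` leaves `⌊c/f⌋` free. -/
lemma sum_range_mul_char_mul_e {f m : ℕ} (hf : 0 < f) (hm : 0 < m)
    (ψ : DirichletCharacter ℂ f) :
    ∑ c ∈ Finset.range (f * m), ψ (c : ZMod f) * e ((c : ℝ) / (f * m : ℕ)) =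
      if m = 1 then gaussSumOf ψ else 0 := by
  split_ifs with h
  · subst h
    simp [gaussSumOf]
  · rw [sum_range_mul_eq, Finset.sum_comm]
    refine Finset.sum_eq_zero fun r _ => ?_
    have key : ∀ q ∈ Finset.range m,
        ψ ((f * q + r : ℕ) : ZMod f) * e (((f * q + r : ℕ) : ℝ) / (f * m : ℕ)) =
          ψ (r : ZMod f) * e ((r : ℝ) / (f * m : ℕ)) * e ((q : ℝ) / m) := by
      intro q _
      rw [mul_assoc, ← e_add]
      congr 2
      · simp
      · have : (f : ℝ) ≠ 0 := by positivity
        have : (m : ℝ) ≠ 0 := by positivity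
        push_cast
        field_simp
        ring
    rw [Finset.sum_congr rfl key, ← Finset.mul_sum, sum_e_div (by omega), mul_zero]

lemma sum_moebius_divisors (k : ℕ) :
    ∑ d ∈ k.divisors, (ArithmeticFunction.moebius d : ℂ) = if k = 1 then 1 else 0 := by
  have h := congrArg (fun F : ArithmeticFunction ℤ => F k) ArithmeticFunction.moebius_mul_coe_zeta
  simp only [ArithmeticFunction.coe_mul_zeta_apply, ArithmeticFunction.one_apply] at h
  exact_mod_cast congrArg (Int.cast : ℤ → ℂ) h

lemma sum_range_multiples {D d : ℕ} (hd : d ∣ D) (hD : 0 < D) (g : ℕ → ℂ) :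
    ∑ b ∈ Finset.range D with d ∣ b, g b = ∑ c ∈ Finset.range (D / d), g (d * c) := by
  obtain ⟨k, rfl⟩ := hd
  have hd0 : 0 < d := Nat.pos_of_mul_pos_right hD
  rw [Nat.mul_div_cancel_left _ hd0]
  symm
  refine Finset.sum_bij (fun c _ => d * c) ?_ ?_ ?_ ?_
  · intro c hc
    simp only [Finset.mem_filter, Finset.mem_range] at hc ⊢
    exact ⟨Nat.mul_lt_mul_of_pos_left hc hd0, dvd_mul_right _ _⟩
  · intro x _ y _ h
    exact Nat.eq_of_mul_eq_mul_left hd0 h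
  · intro b hb
    simp only [Finset.mem_filter, Finset.mem_range] at hb
    obtain ⟨hb, c, rfl⟩ := hb
    exact ⟨c, Finset.mem_range.2 (Nat.lt_of_mul_lt_mul_left hb), rfl⟩
  · intros
    rfl

/-- Möbius inversion of the coprimality condition in a sum over residues modulo `D`. -/
lemma sum_coprime_eq_sum_moebius {D : ℕ} (hD : 0 < D) (g : ℕ → ℂ) :
    ∑ b ∈ Finset.range D, (if b.Coprime D then g b else 0) =
      ∑ d ∈ D.divisors, (ArithmeticFunction.moebius d : ℂ) *
        ∑ c ∈ Finset.range (D / d), g (d * c) := by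
  have h1 : ∀ b ∈ Finset.range D, (if b.Coprime D then g b else 0) =
      ∑ d ∈ D.divisors, if d ∣ b then (ArithmeticFunction.moebius d : ℂ) * g b else 0 := by
    intro b _
    have hdiv : (b.gcd D).divisors = D.divisors.filter (· ∣ b) := by
      ext d
      simp [Nat.dvd_gcd_iff, hD.ne']
      tauto
    rw [← Finset.sum_filter, ← hdiv, ← Finset.sum_mul, sum_moebius_divisors]
    simp [Nat.Coprime]
  rw [Finset.sum_congr rfl h1, Finset.sum_comm]
  refine Finset.sum_congr rfl fun d hd => ?_
  rw [← Finset.sum_filter, ← Finset.mul_sum,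
    sum_range_multiples (Nat.dvd_of_mem_divisors hd) hD]

lemma char_natCast_eq_ite {D : ℕ} (χ : DirichletCharacter ℂ D) (b : ℕ) :
    χ (b : ZMod D) =
      if b.Coprime D then χ.primitiveCharacter (b : ZMod χ.conductor) else 0 := by
  split_ifs with h
  · have := χ.primitiveCharacter_apply_of_isCoprime (a := b) (Nat.isCoprime_iff_coprime.2 h)
    simpa using this.symm
  · exact χ.map_nonunit (mt (ZMod.isUnit_iff_coprime b D).1 h)

/-- The Gauss sum of an arbitrary character in terms of that of its inducing primitive one. -/
lemma gaussSumOf_eq_primitive {D : ℕ} (hD : 0 < D) (χ : DirichletCharacter ℂ D) :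
    gaussSumOf χ = (ArithmeticFunction.moebius (D / χ.conductor) : ℂ) *
      χ.primitiveCharacter ((D / χ.conductor : ℕ) : ZMod χ.conductor) *
      gaussSumOf χ.primitiveCharacter := by
  have hfD := χ.conductor_dvd_level
  have hexp : gaussSumOf χ = ∑ b ∈ Finset.range D, (if b.Coprime D then
      χ.primitiveCharacter (b : ZMod χ.conductor) * e ((b : ℝ) / D) else 0) := by
    refine Finset.sum_congr rfl fun b _ => ?_
    rw [char_natCast_eq_ite]
    split_ifs <;> simp
  rw [hexp, sum_coprime_eq_sum_moebius hD]
  clear hexp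
  generalize χ.primitiveCharacter = ψ
  generalize χ.conductor = f at *
  have hf : 0 < f := Nat.pos_of_dvd_of_pos hfD hD
  have inner : ∀ d ∈ D.divisors,
      ∑ c ∈ Finset.range (D / d), ψ ((d * c : ℕ) : ZMod f) * e (((d * c : ℕ) : ℝ) / D) =
        if d = D / f then ψ (d : ZMod f) * gaussSumOf ψ else 0 := by
    intro d hd
    have hdD := Nat.dvd_of_mem_divisors hd
    have hd0 : 0 < d := Nat.pos_of_dvd_of_pos hdD hD
    by_cases hcop : d.Coprime f
    · obtain ⟨m, rfl⟩ := hcop.mul_dvd_of_dvd_of_dvd hdD hfD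
      have hm : 0 < m := Nat.pos_of_mul_pos_left hD
      have hcond : d = d * f * m / f ↔ m = 1 := by
        rw [show d * f * m = f * (d * m) by ring, Nat.mul_div_cancel_left _ hf]
        constructor
        · intro h
          exact Nat.eq_of_mul_eq_mul_left hd0 (by omega)
        · rintro rfl
          simp
      have hquot : d * f * m / d = f * m := by
        rw [mul_assoc, Nat.mul_div_cancel_left _ hd0]
      simp only [hcond]
      rw [hquot]
      trans ψ (d : ZMod f) *
        ∑ c ∈ Finset.range (f * m), ψ (c : ZMod f) * e ((c : ℝ) / (f * m : ℕ))
      · rw [Finset.mul_sum]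
        refine Finset.sum_congr rfl fun c _ => ?_
        rw [Nat.cast_mul, map_mul, mul_assoc]
        congr 3
        have : (d : ℝ) ≠ 0 := by positivity
        push_cast
        field_simp
      · rw [sum_range_mul_char_mul_e hf hm]
        split_ifs <;> simp
    · have h0 : ψ (d : ZMod f) = 0 := ψ.map_nonunit (mt (ZMod.isUnit_iff_coprime d f).1 hcop)
      simp [h0]
  rw [Finset.sum_congr rfl fun d hd => by rw [inner d hd]]
  simp only [mul_ite, mul_zero]
  rw [Finset.sum_ite_eq_of_mem' _ _ _ (by simpa [hD.ne'] using Nat.div_dvd_of_dvd hfD)]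
  ring

/-- Character expansion of `e(-k/D)` on residues `k` coprime to `D`. -/
lemma sum_char_mul_conj_gaussSumOf {D : ℕ} (hD : 0 < D) (k : ℤ) (hk : IsUnit (k : ZMod D)) :
    ∑ χ : DirichletCharacter ℂ D, χ (k : ZMod D) * (starRingEnd ℂ) (gaussSumOf χ) =
      D.totient * e (-(k : ℝ) / D) := by
  have : NeZero D := ⟨hD.ne'⟩
  have horth : ∀ b : ZMod D, ∑ χ : DirichletCharacter ℂ D,
      χ (k : ZMod D) * (starRingEnd ℂ) (χ b) = if (k : ZMod D) = b then (D.totient : ℂ) else 0 := by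
    intro b
    have h := congrArg (starRingEnd ℂ) (DirichletCharacter.sum_char_inv_mul_char_eq ℂ hk b)
    rw [map_sum] at h
    rw [apply_ite (starRingEnd ℂ), map_natCast, map_zero] at h
    rw [← h]
    refine Finset.sum_congr rfl fun χ _ => ?_
    have hinv : χ (k : ZMod D)⁻¹ = (starRingEnd ℂ) (χ (k : ZMod D)) := by
      have h1 : χ (k : ZMod D)⁻¹ * χ (k : ZMod D) = 1 := by
        rw [← map_mul, ZMod.inv_mul_of_unit _ hk, map_one]
      have h2 := MulChar.star_apply' χ (k : ZMod D)
      rw [MulChar.inv_apply_eq_inv'] at h2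
      exact (eq_inv_of_mul_eq_one_left h1).trans h2.symm
    rw [map_mul, hinv, Complex.conj_conj]
  simp only [gaussSumOf, map_sum, map_mul, conj_e, Finset.mul_sum, ← mul_assoc]
  rw [Finset.sum_comm]
  simp only [← Finset.sum_mul, horth]
  rw [Finset.sum_eq_single ((k : ZMod D).val)]
  · have hmod : ((((k : ZMod D).val : ℤ) : ℤ) : ZMod D) = (k : ZMod D) := by simp
    obtain ⟨t, ht⟩ := (ZMod.intCast_eq_intCast_iff_dvd_sub _ _ _).1 hmod
    have hD' : (D : ℝ) ≠ 0 := by positivity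
    have hval : -(((k : ZMod D).val : ℝ) / D) = -(k : ℝ) / D + (t : ℤ) := by
      have ht' : (k : ℝ) - ((k : ZMod D).val : ℝ) = D * t := by exact_mod_cast ht
      field_simp
      linarith
    rw [hval, e_add, e_int]
    simp
  · intro b hb hne
    rw [if_neg, zero_mul]
    intro h
    rw [h, ZMod.val_natCast, Nat.mod_eq_of_lt (Finset.mem_range.1 hb)] at hne
    exact hne rfl
  · intro h
    exact absurd (Finset.mem_range.2 (ZMod.val_lt _)) h

/-- Lemma 3.1: for `(a, D) = 1` and the principal character `χ₀ (mod D)`,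
`χ₀(n) e(-an/D) = (1/φ(D)) ∑_{χ (mod D)} μ(D/f_χ) χ*(a) conj(χ*(D/f_χ)) conj(τ(χ*)) χ(n)`. -/
theorem principal_times_e_eq_sum_over_characters
    (D : ℕ) (hD : 0 < D) (a : ℤ) (ha : a.gcd D = 1) (n : ℕ) (hn : 0 < n) :
    (1 : DirichletCharacter ℂ D) (n : ZMod D) * e (-((a : ℝ) * n) / D) =
      (D.totient : ℂ)⁻¹ *
        ∑ χ : DirichletCharacter ℂ D,
          (ArithmeticFunction.moebius (D / χ.conductor) : ℂ) *
            χ.primitiveCharacter ((a : ZMod χ.conductor)) *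
            (starRingEnd ℂ) (χ.primitiveCharacter (((D / χ.conductor : ℕ) : ZMod χ.conductor))) *
            (starRingEnd ℂ) (gaussSumOf χ.primitiveCharacter) *
            χ (n : ZMod D) := by
  have haD : IsCoprime a (D : ℤ) := Int.isCoprime_iff_gcd_eq_one.2 ha
  by_cases hnD : IsUnit (n : ZMod D)
  · have haU : IsUnit (a : ZMod D) := by
      have := haD.map (Int.castRingHom (ZMod D))
      simpa [isCoprime_zero_right] using this
    have hk : IsUnit ((a * n : ℤ) : ZMod D) := by
      push_cast
      exact haU.mul hnD
    have hφ : (D.totient : ℂ) ≠ 0 := by exact_mod_cast (Nat.totient_pos.2 hD).ne'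
    have hmain := sum_char_mul_conj_gaussSumOf hD (a * n) hk
    push_cast at hmain
    rw [MulChar.one_apply hnD, one_mul, eq_inv_mul_iff_mul_eq₀ hφ, ← hmain]
    refine Finset.sum_congr rfl fun χ _ => ?_
    rw [gaussSumOf_eq_primitive hD χ, χ.primitiveCharacter_apply_of_isCoprime haD, map_mul,
      map_mul, map_mul, map_intCast (starRingEnd ℂ)]
    ring
  · simp [MulChar.map_nonunit _ hnD]
end

section
/- Let D be a positive integer, let a be an integer with gcd(a,D)=1, and let χ be a Dirichlet character (mod D). Then Σ_{b=0}^{D-1} conj(χ(b))·e(-ab/D) = μ(D/f_χ) · χ*(a) · conj(χ*(D/f_χ)) · conj(τ(χ*)). -/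
lemma sum_range_eq_sum_zmod {N : ℕ} [NeZero N] (F : ZMod N → ℂ) :
    ∑ b ∈ Finset.range N, F (b : ZMod N) = ∑ x : ZMod N, F x := by
  refine Finset.sum_bij' (fun b _ => (b : ZMod N)) (fun x _ => x.val) ?_ ?_ ?_ ?_ ?_
  · simp
  · intro x _; simpa using ZMod.val_lt x
  · intro b hb; exact ZMod.val_cast_of_lt (Finset.mem_range.1 hb)
  · intro x _; simp
  · simp

lemma e_eq_stdAddChar {N : ℕ} [NeZero N] (j : ℤ) :
    e ((j : ℝ) / N) = ZMod.stdAddChar (j : ZMod N) := by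
  rw [ZMod.stdAddChar_coe, e]
  congr 1
  push_cast
  ring

lemma sum_range_dvd {D d : ℕ} (hd : d ∣ D) (hD : 0 < D) (F : ℕ → ℂ) :
    ∑ b ∈ Finset.range D, (if d ∣ b then F b else 0) = ∑ c ∈ Finset.range (D / d), F (d * c) := by
  obtain ⟨m, rfl⟩ := hd
  have hd0 : 0 < d := Nat.pos_of_mul_pos_right hD
  rw [Nat.mul_div_cancel_left _ hd0, ← Finset.sum_filter]
  symm
  refine Finset.sum_bij (fun c _ => d * c) ?_ ?_ ?_ ?_
  · intro c hc
    simpa [hd0] using hc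
  · intro c _ c' _ h
    exact Nat.eq_of_mul_eq_mul_left hd0 h
  · intro b hb
    obtain ⟨hb, c, rfl⟩ := Finset.mem_filter.1 hb
    exact ⟨c, by simpa [hd0] using hb, rfl⟩
  · intros; rfl

lemma sum_moebius_dvd {D : ℕ} (hD : 0 < D) (b : ℕ) :
    ∑ d ∈ D.divisors, (if d ∣ b then (ArithmeticFunction.moebius d : ℂ) else 0) =
      if b.Coprime D then 1 else 0 := by
  have h1 : D.divisors.filter (· ∣ b) = (b.gcd D).divisors := by
    ext d
    have : b.gcd D ≠ 0 := (Nat.gcd_pos_of_pos_right _ hD).ne'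
    simp [Nat.dvd_gcd_iff, hD.ne', this]
    tauto
  rw [← Finset.sum_filter, h1]
  have := congrArg (fun g => g (b.gcd D)) ArithmeticFunction.moebius_mul_coe_zeta
  simp only [ArithmeticFunction.coe_mul_zeta_apply,
    ArithmeticFunction.one_apply] at this
  rw [← Int.cast_sum, this]
  simp [Nat.Coprime]

/-- An imprimitive character expressed through its primitive character, with the coprimality
condition modulo `D` resolved by the Möbius function. -/
lemma char_eq_sum_moebius {D : ℕ} (hD : 0 < D) (χ : DirichletCharacter ℂ D) (b : ℕ) :
    χ (b : ZMod D) = ∑ d ∈ D.divisors,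
      (if d ∣ b then (ArithmeticFunction.moebius d : ℂ) * χ.primitiveCharacter b else 0) := by
  have h : ∀ d, (if d ∣ b then (ArithmeticFunction.moebius d : ℂ) * χ.primitiveCharacter b else 0)
      = (if d ∣ b then (ArithmeticFunction.moebius d : ℂ) else 0) * χ.primitiveCharacter b := by
    intro d; split_ifs <;> simp
  simp_rw [h]
  rw [← Finset.sum_mul, sum_moebius_dvd hD]
  split_ifs with hb
  · have := χ.primitiveCharacter_apply_of_isCoprime (a := (b : ℤ)) (Nat.isCoprime_iff_coprime.2 hb)
    simpa using this.symm
  · rw [zero_mul]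
    apply MulChar.map_nonunit
    rwa [ZMod.isUnit_iff_coprime]

/-- The sum vanishes because the shift `c ↦ c + f` multiplies it by `e(a/k) ≠ 1`. -/
lemma sum_twist_eq_zero {f k : ℕ} (hf : 0 < f) (hk : 0 < k) (hk1 : k ≠ 1) (a : ℤ)
    (hak : IsCoprime a (k : ℤ)) (ψ : DirichletCharacter ℂ f) :
    ∑ c ∈ Finset.range (f * k), ψ (c : ZMod f) * e ((a : ℝ) * c / (f * k : ℕ)) = 0 := by
  have : NeZero (f * k) := ⟨(Nat.mul_pos hf hk).ne'⟩
  set G : ZMod (f * k) → ℂ := fun x =>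
    ψ (ZMod.castHom (Dvd.intro k rfl) (ZMod f) x) * ZMod.stdAddChar ((a : ZMod (f * k)) * x) with hG
  have h1 : ∑ c ∈ Finset.range (f * k), ψ (c : ZMod f) * e ((a : ℝ) * c / (f * k : ℕ)) =
      ∑ x, G x := by
    rw [← sum_range_eq_sum_zmod]
    refine Finset.sum_congr rfl fun c _ => ?_
    have := e_eq_stdAddChar (N := f * k) (a * c)
    push_cast at this
    simp only [hG, map_natCast]
    rw [← this]
    push_cast
    rfl
  rw [h1]
  have h2 : ∑ x, G x = ZMod.stdAddChar ((a * f : ℤ) : ZMod (f * k)) * ∑ x, G x := by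
    rw [Finset.mul_sum, ← Equiv.sum_comp (Equiv.addRight (f : ZMod (f * k))) G]
    refine Finset.sum_congr rfl fun x _ => ?_
    simp only [hG, Equiv.coe_addRight, map_add, map_natCast, CharP.cast_eq_zero, add_zero, mul_add,
      AddChar.map_add_eq_mul]
    push_cast
    ring
  have h3 : (ZMod.stdAddChar ((a * f : ℤ) : ZMod (f * k)) : ℂ) ≠ 1 := by
    intro h
    rw [← AddChar.map_zero_eq_one (ZMod.stdAddChar (N := f * k))] at h
    have h := ZMod.injective_stdAddChar h
    rw [ZMod.intCast_zmod_eq_zero_iff_dvd] at h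
    push_cast at h
    rw [mul_comm a] at h
    have h := Int.dvd_of_mul_dvd_mul_left (by exact_mod_cast hf.ne') h
    have h := hak.isUnit_of_dvd' h dvd_rfl
    rw [Int.ofNat_isUnit, Nat.isUnit_iff] at h
    exact hk1 h
  by_contra h
  exact h3 (mul_right_cancel₀ h (by rw [one_mul, ← h2]))

lemma gaussSumOf_eq {f : ℕ} [NeZero f] (ψ : DirichletCharacter ℂ f) :
    gaussSumOf ψ = gaussSum ψ ZMod.stdAddChar := by
  rw [gaussSumOf, gaussSum, ← sum_range_eq_sum_zmod]
  refine Finset.sum_congr rfl fun c _ => ?_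
  have := e_eq_stdAddChar (N := f) c
  push_cast at this
  rw [this]

lemma sum_twist_eq {f : ℕ} (hf : 0 < f) (a : ℤ) (haf : IsCoprime a (f : ℤ))
    (ψ : DirichletCharacter ℂ f) :
    ∑ c ∈ Finset.range f, ψ (c : ZMod f) * e ((a : ℝ) * c / f) =
      (starRingEnd ℂ) (ψ (a : ZMod f)) * gaussSumOf ψ := by
  have : NeZero f := ⟨hf.ne'⟩
  have hu : IsUnit (a : ZMod f) := by
    rw [ZMod.coe_int_isUnit_iff_isCoprime]; exact haf.symm
  have h := gaussSum_mulShift_eq ψ ZMod.stdAddChar hu.unit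
  rw [gaussSumOf_eq, starRingEnd_apply, MulChar.star_apply']
  rw [IsUnit.unit_spec] at h
  rw [← h, gaussSum, ← sum_range_eq_sum_zmod]
  refine Finset.sum_congr rfl fun c _ => ?_
  have := e_eq_stdAddChar (N := f) (a * c)
  push_cast at this
  rw [this, AddChar.mulShift_apply]

/-- The conjugate of the final identity. -/
lemma sum_char_times_e_eq (D : ℕ) (hD : 0 < D) (a : ℤ) (ha : IsCoprime a (D : ℤ))
    (χ : DirichletCharacter ℂ D) :
    ∑ b ∈ Finset.range D, χ (b : ZMod D) * e ((a : ℝ) * b / D) =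
      (ArithmeticFunction.moebius (D / χ.conductor) : ℂ) *
        (starRingEnd ℂ) (χ.primitiveCharacter ((a : ZMod χ.conductor))) *
        χ.primitiveCharacter (((D / χ.conductor : ℕ) : ZMod χ.conductor)) *
        gaussSumOf χ.primitiveCharacter := by
  have hfD := χ.conductor_dvd_level
  have hχ := char_eq_sum_moebius hD χ
  -- From here on only `hfD` and `hχ` matter, not how the conductor arises from `D` and `χ`.
  revert hfD hχ
  generalize χ.primitiveCharacter = ψ
  revert ψ
  generalize χ.conductor = f
  intro ψ hfD hχ
  have hf : 0 < f := Nat.pos_of_dvd_of_pos hfD hD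
  have h1 : ∑ b ∈ Finset.range D, χ (b : ZMod D) * e ((a : ℝ) * b / D) =
      ∑ d ∈ D.divisors, (ArithmeticFunction.moebius d : ℂ) * ψ (d : ZMod f) *
        ∑ c ∈ Finset.range (D / d), ψ (c : ZMod f) * e ((a : ℝ) * c / (D / d : ℕ)) := by
    simp_rw [hχ, Finset.sum_mul]
    rw [Finset.sum_comm]
    refine Finset.sum_congr rfl fun d hd => ?_
    have hdD := Nat.dvd_of_mem_divisors hd
    have hd0 : (d : ℝ) ≠ 0 := by exact_mod_cast (Nat.pos_of_dvd_of_pos hdD hD).ne'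
    simp_rw [ite_mul, zero_mul]
    rw [sum_range_dvd hdD hD, Finset.mul_sum]
    refine Finset.sum_congr rfl fun c _ => ?_
    have : (a : ℝ) * (d * c : ℕ) / D = (a : ℝ) * c / (D / d : ℕ) := by
      rw [Nat.cast_div hdD hd0]
      push_cast
      field_simp
    rw [this]
    push_cast
    rw [map_mul]
    ring
  rw [h1, Finset.sum_eq_single (D / f)]
  · rw [Nat.div_div_self hfD hD.ne',
      sum_twist_eq hf a (ha.of_isCoprime_of_dvd_right (by exact_mod_cast hfD))]
    ring
  · intro d hd hdr
    have hdD := Nat.dvd_of_mem_divisors hd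
    by_cases hdf : d.Coprime f
    · obtain ⟨r, rfl⟩ := hfD
      rw [Nat.mul_div_cancel_left _ hf] at hdr
      obtain ⟨k, rfl⟩ := hdf.dvd_of_dvd_mul_left hdD
      have hd0 : 0 < d := Nat.pos_of_dvd_of_pos hdD hD
      have hk : 0 < k := Nat.pos_of_ne_zero (by rintro rfl; simp at hD)
      have hq : f * (d * k) / d = f * k := by
        rw [Nat.mul_left_comm, Nat.mul_div_cancel_left _ hd0]
      rw [hq, sum_twist_eq_zero hf hk (by rintro rfl; simp at hdr) a, mul_zero]
      exact ha.of_isCoprime_of_dvd_right ⟨f * d, by push_cast; ring⟩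
    · rw [MulChar.map_nonunit ψ (by rwa [ZMod.isUnit_iff_coprime])]
      simp
  · intro h
    exact absurd (Nat.mem_divisors.2 ⟨Nat.div_dvd_of_dvd hfD, hD.ne'⟩) h

/-- For `(a, D) = 1` and a Dirichlet character `χ (mod D)`,
`∑_{b=0}^{D-1} conj(χ(b)) e(-ab/D) = μ(D/f_χ) χ*(a) conj(χ*(D/f_χ)) conj(τ(χ*))`. -/
theorem sum_conj_char_times_e_eq
    (D : ℕ) (hD : 0 < D) (a : ℤ) (ha : a.gcd D = 1) (χ : DirichletCharacter ℂ D) :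
    ∑ b ∈ Finset.range D, (starRingEnd ℂ) (χ (b : ZMod D)) * e (-((a : ℝ) * b) / D) =
      (ArithmeticFunction.moebius (D / χ.conductor) : ℂ) *
        χ.primitiveCharacter ((a : ZMod χ.conductor)) *
        (starRingEnd ℂ) (χ.primitiveCharacter (((D / χ.conductor : ℕ) : ZMod χ.conductor))) *
        (starRingEnd ℂ) (gaussSumOf χ.primitiveCharacter) := by
  have h := congrArg (starRingEnd ℂ)
    (sum_char_times_e_eq D hD a (Int.isCoprime_iff_gcd_eq_one.2 ha) χ)
  simpa [conj_e, neg_div] using h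
end

section
/- Let D be a positive squarefree integer and let a : ℕ≥1 → ℂ with a(1)=1 split polynomially at every prime p dividing D. Then for every positive integer n one has a(n)·𝟙[gcd(n,D)=1] = Σ_{m | gcd(n, D*)} B_m · a(n/m), where the sum runs over the positive divisors m of gcd(n, D*). -/
/-!
If `n` is coprime to `D`, it is coprime to `D*` and only the term `m = 1` survives. Otherwise one
prime `p` dividing both `n` and `D` already forces the sum to vanish. Write `n = p ^ k * n'` with
`p ∤ n'` and `k ≥ 1`; the `p`-part of `gcd(n, D*)` is `p ^ min k ∂_p`, so each divisor is uniquely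
`p ^ ℓ * m'` with `ℓ ≤ min k ∂_p` and `m' ∣ n'`. Its term factors as
`(A_ℓ(p) a(p ^ (k - ℓ))) (B_{m'} a(n' / m'))` (`Bcoef_prime_pow_mul`), and for fixed `m'` the sum
over `ℓ` is the recurrence that defines splitting at `p`.
-/

/-- The data `(∂, A)` witnesses that the sequence `a` splits polynomially at the prime `p`:
`a` is multiplicative across powers of `p`, `A p 0 = 1`, `A p ∂_p ≠ 0`, and the local factor
`∑_{ℓ≥0} a(p^ℓ) p^{-ℓs}` has inverse `∑_{ℓ=0}^{∂_p} A_ℓ(p) p^{-ℓs}`, i.e.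
`∑_{ℓ=0}^{min(k,∂_p)} A_ℓ(p) a(p^{k-ℓ}) = 0` for all `k ≥ 1`. -/
def SplitsPolynomiallyAt (a : ℕ → ℂ) (dd : ℕ → ℕ) (A : ℕ → ℕ → ℂ) (p : ℕ) : Prop :=
  (∀ k n : ℕ, ¬ p ∣ n → a (p ^ k * n) = a (p ^ k) * a n) ∧
  A p 0 = 1 ∧ A p (dd p) ≠ 0 ∧
  (∀ k : ℕ, 1 ≤ k → ∑ ℓ ∈ Finset.range (min k (dd p) + 1), A p ℓ * a (p ^ (k - ℓ)) = 0)

/-- `B m = ∏_{p^ℓ ∥ m} A_ℓ(p)`. -/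
noncomputable def Bcoef (A : ℕ → ℕ → ℂ) (m : ℕ) : ℂ :=
  ∏ p ∈ m.primeFactors, A p (m.factorization p)

/-- `D* = ∏_{p | D} p^{∂_p}`. -/
def Dstar (D : ℕ) (dd : ℕ → ℕ) : ℕ := ∏ p ∈ D.primeFactors, p ^ dd p

lemma sum_divisors_prime_pow_mul {p j g : ℕ} (hp : p.Prime) (hg : ¬ p ∣ g) (f : ℕ → ℂ) :
    ∑ m ∈ (p ^ j * g).divisors, f m =
      ∑ m ∈ g.divisors, ∑ l ∈ Finset.range (j + 1), f (p ^ l * m) := by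
  have hc : (p ^ j).Coprime g := ((Nat.Prime.coprime_iff_not_dvd hp).2 hg).pow_left j
  rw [Nat.divisors_mul, Finset.mul_def, Finset.sum_image hc.mul_injOn_divisors,
    Finset.sum_product, Nat.sum_divisors_prime_pow hp, Finset.sum_comm]

/-- The normalisation `A p 0 = 1` makes the formula hold also when `l = 0`, where `p` does not
occur in the product defining `Bcoef`. -/
lemma Bcoef_prime_pow_mul {A : ℕ → ℕ → ℂ} {p m : ℕ} (hp : p.Prime) (hA : A p 0 = 1)
    (hm : ¬ p ∣ m) (l : ℕ) : Bcoef A (p ^ l * m) = A p l * Bcoef A m := by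
  rcases Nat.eq_zero_or_pos l with rfl | hl
  · simp [hA]
  have hm0 : m ≠ 0 := by rintro rfl; simp at hm
  have hpl : p ^ l ≠ 0 := pow_ne_zero _ hp.ne_zero
  unfold Bcoef
  rw [Nat.primeFactors_mul hpl hm0, Nat.primeFactors_prime_pow hl.ne' hp,
    Finset.prod_union (by simp [hm]), Finset.prod_singleton]
  congr 1
  · simp [Nat.factorization_mul hpl hm0, hp.factorization_self,
      Nat.factorization_eq_zero_of_not_dvd hm]
  · refine Finset.prod_congr rfl fun q hq => ?_
    have hqp : p ≠ q := by
      rintro rfl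
      exact hm (Nat.dvd_of_mem_primeFactors hq)
    simp [Nat.factorization_mul hpl hm0, hp.factorization, hqp]

lemma Dstar_ne_zero (D : ℕ) (dd : ℕ → ℕ) : Dstar D dd ≠ 0 :=
  Finset.prod_ne_zero_iff.2 fun _ hp => pow_ne_zero _ (Nat.prime_of_mem_primeFactors hp).ne_zero

lemma factorization_Dstar {D p : ℕ} (dd : ℕ → ℕ) (hp : p ∈ D.primeFactors) :
    (Dstar D dd).factorization p = dd p := by
  unfold Dstar
  rw [Nat.factorization_prod_apply
    fun q hq => pow_ne_zero _ (Nat.prime_of_mem_primeFactors hq).ne_zero,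
    Finset.sum_eq_single_of_mem p hp]
  · simp [(Nat.prime_of_mem_primeFactors hp).factorization_self]
  · intro q hq hqp
    simp [(Nat.prime_of_mem_primeFactors hq).factorization, hqp]

/-- Lemma 3.2: if `D` is squarefree and `a`, with `a(1) = 1`, splits polynomially at every prime
`p | D`, then for every `n ≥ 1` one has
`a(n)·𝟙[gcd(n,D)=1] = ∑_{m | gcd(n,D*)} B_m a(n/m)`. -/
theorem indicator_coprime_eq_sum_divisors
    (D : ℕ) (hD : 0 < D) (hsq : Squarefree D)
    (a : ℕ → ℂ) (ha1 : a 1 = 1)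
    (dd : ℕ → ℕ) (A : ℕ → ℕ → ℂ)
    (hsplit : ∀ p : ℕ, p.Prime → p ∣ D → SplitsPolynomiallyAt a dd A p)
    (n : ℕ) (hn : 0 < n) :
    a n * (if Nat.gcd n D = 1 then 1 else 0) =
      ∑ m ∈ (Nat.gcd n (Dstar D dd)).divisors, Bcoef A m * a (n / m) := by
  by_cases h : Nat.gcd n D = 1
  · have hg : Nat.gcd n (Dstar D dd) = 1 :=
      Nat.Coprime.prod_right fun p hp =>
        (Nat.Coprime.coprime_dvd_right (Nat.dvd_of_mem_primeFactors hp) h).pow_right _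
    simp [h, hg, Bcoef]
  obtain ⟨p, hp, hpn, hpD⟩ := Nat.Prime.not_coprime_iff_dvd.1 h
  obtain ⟨hmul, hA0, -, hrec⟩ := hsplit p hp hpD
  have hn0 : n ≠ 0 := hn.ne'
  set g := Nat.gcd n (Dstar D dd) with hgdef
  have hg0 : g ≠ 0 := Nat.gcd_ne_zero_left hn0
  have hgp : g.factorization p = min (n.factorization p) (dd p) := by
    rw [hgdef, Nat.factorization_gcd hn0 (Dstar_ne_zero D dd), Finsupp.inf_apply,
      factorization_Dstar dd (Nat.mem_primeFactors.2 ⟨hp, hpD, hD.ne'⟩)]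
  set k := n.factorization p with hk
  have hk1 : 1 ≤ k := (hp.dvd_iff_one_le_factorization hn0).1 hpn
  set n' := n / p ^ k with hn'
  have hnn : n = p ^ k * n' := (Nat.ordProj_mul_ordCompl_eq_self n p).symm
  have hpn' : ¬ p ∣ n' := Nat.not_dvd_ordCompl hp hn0
  set g' := g / p ^ g.factorization p with hg'
  have hgg : g = p ^ min k (dd p) * g' := by
    rw [← hgp]
    exact (Nat.ordProj_mul_ordCompl_eq_self g p).symm
  have hpg' : ¬ p ∣ g' := Nat.not_dvd_ordCompl hp hg0
  have hg'n' : g' ∣ n' := Nat.ordCompl_dvd_ordCompl_of_dvd (Nat.gcd_dvd_left _ _) p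
  rw [if_neg h, mul_zero, hgg, sum_divisors_prime_pow_mul hp hpg']
  refine (Finset.sum_eq_zero fun m hm => ?_).symm
  obtain ⟨c, hc⟩ := (Nat.dvd_of_mem_divisors hm).trans hg'n'
  have hpm : ¬ p ∣ m := fun hd => hpg' (hd.trans (Nat.dvd_of_mem_divisors hm))
  have hpc : ¬ p ∣ c := fun hd => hpn' (hc ▸ hd.mul_left m)
  calc ∑ l ∈ Finset.range (min k (dd p) + 1), Bcoef A (p ^ l * m) * a (n / (p ^ l * m))
      = ∑ l ∈ Finset.range (min k (dd p) + 1),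
          A p l * a (p ^ (k - l)) * (Bcoef A m * a c) := by
        refine Finset.sum_congr rfl fun l hl => ?_
        have hlk : l ≤ k := by
          have := Finset.mem_range.1 hl
          omega
        have hdiv : n / (p ^ l * m) = p ^ (k - l) * c := by
          refine Nat.div_eq_of_eq_mul_right (Nat.mul_pos (pow_pos hp.pos l)
            (Nat.pos_of_mem_divisors hm)) ?_
          rw [hnn, hc, ← Nat.add_sub_cancel' hlk, pow_add, Nat.add_sub_cancel_left]
          ring
        rw [hdiv, hmul _ _ hpc, Bcoef_prime_pow_mul hp hA0 hpm]
        ring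
    _ = 0 := by rw [← Finset.sum_mul, hrec k hk1, zero_mul]
end

section
/- Let D be a positive integer and let a : ℕ≥1 → ℂ. Then a is saturated (mod D) if and only if for every positive integer M the family of sequences (n ↦ χ(n)·a(n)·𝟙[gcd(n,M)=1]), indexed by the Dirichlet characters χ (mod D), is linearly independent over ℂ; that is, if and only if for every positive integer M and every choice of complex coefficients (c_χ)_{χ (mod D)}, the relation Σ_{χ (mod D)} c_χ · χ(n) · a(n) = 0 for all positive integers n with gcd(n,M)=1 forces c_χ = 0 for every χ. -/
/-!
Only the values of the twists on the unit classes modulo `D` matter, and a saturated sequence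
takes a nonzero value at some admissible `n` in each of them. A relation `∑ c_χ χ(n) a(n) = 0`
therefore yields `∑ c_χ χ = 0` as functions on `ZMod D`, and distinct characters are linearly
independent (`linearIndependent_monoidHom`).

Conversely, if for some `M` the sequence `a` vanishes at every admissible `n ≡ b (mod D)`, then
column orthogonality (`DirichletCharacter.sum_char_inv_mul_char_eq`) shows that the coefficients
`c_χ = χ(b⁻¹)` give a relation, and it is nontrivial because the trivial character takes the
value `1` at `b⁻¹`.
-/

/-- A sequence `a : ℕ → ℂ` (on positive integers) is saturated (mod D) if for every positive
integer `M` and every integer `b` coprime to `D` there is a positive integer `ν ≡ b (mod D)`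
with `(ν, M) = 1` and `a(ν) ≠ 0`. -/
def IsSaturated (a : ℕ → ℂ) (D : ℕ) : Prop :=
  ∀ M : ℕ, 0 < M → ∀ b : ℤ, b.gcd D = 1 →
    ∃ ν : ℕ, 0 < ν ∧ ((ν : ℤ) : ZMod D) = (b : ZMod D) ∧ Nat.gcd ν M = 1 ∧ a ν ≠ 0

/-- `a` is saturated (mod D) if and only if for every positive integer `M` the sequences
`n ↦ χ(n) a(n)` restricted to `(n, M) = 1`, indexed by the Dirichlet characters `χ (mod D)`,
are linearly independent over `ℂ`. -/
theorem isSaturated_iff_twists_linearIndependent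
    (D : ℕ) (hD : 0 < D) (a : ℕ → ℂ) :
    IsSaturated a D ↔
      ∀ M : ℕ, 0 < M → ∀ c : DirichletCharacter ℂ D → ℂ,
        (∀ n : ℕ, 0 < n → Nat.gcd n M = 1 →
          ∑ χ : DirichletCharacter ℂ D, c χ * χ (n : ZMod D) * a n = 0) →
        ∀ χ : DirichletCharacter ℂ D, c χ = 0 := by
  have : NeZero D := ⟨hD.ne'⟩
  constructor
  · intro hs M hM c hc
    have hzero : ∀ x : ZMod D, ∑ χ : DirichletCharacter ℂ D, c χ * χ x = 0 := by
      intro x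
      by_cases hx : IsUnit x
      · have hb : (x.val : ℤ).gcd D = 1 := by
          rw [Int.gcd_natCast_natCast]
          rw [← ZMod.natCast_zmod_val x] at hx
          exact (ZMod.isUnit_iff_coprime _ _).1 hx
        obtain ⟨ν, hν, hνx, hνM, haν⟩ := hs M hM x.val hb
        have hνx' : (ν : ZMod D) = x := by simpa using hνx
        have h := hc ν hν hνM
        rw [← Finset.sum_mul, hνx'] at h
        exact (mul_eq_zero.1 h).resolve_right haν
      · exact Finset.sum_eq_zero fun χ _ => by rw [χ.map_nonunit hx, mul_zero]
    have hli : LinearIndependent ℂ fun χ : DirichletCharacter ℂ D => (χ : ZMod D → ℂ) :=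
      (linearIndependent_monoidHom (ZMod D) ℂ).comp
        (fun χ : DirichletCharacter ℂ D => χ.toMonoidHom)
        fun χ ψ h => MulChar.ext' fun x => DFunLike.congr_fun h x
    refine Fintype.linearIndependent_iff.1 hli c (funext fun x => ?_)
    simpa [Finset.sum_apply] using hzero x
  · intro hli M hM b hb
    by_contra! hno
    have hbu : IsUnit (b : ZMod D) := by
      rw [ZMod.coe_int_isUnit_iff_isCoprime]
      exact (Int.isCoprime_iff_gcd_eq_one.2 hb).symm
    have hone := hli M hM (fun χ => χ (b : ZMod D)⁻¹) (fun n hn hnM => ?_) 1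
    · have hinv : IsUnit (b : ZMod D)⁻¹ :=
        IsUnit.of_mul_eq_one _ (ZMod.inv_mul_of_unit _ hbu)
      simp [MulChar.one_apply hinv] at hone
    · rw [← Finset.sum_mul, DirichletCharacter.sum_char_inv_mul_char_eq ℂ hbu]
      split_ifs with h
      · rw [hno n hn (by simpa using h.symm) hnM, mul_zero]
      · exact zero_mul _
end

section
/- Let 0 < λ ≤ 1/2, let α be a real number, let β > 0 and q > 0, and set q_F = (4π)²·q. Define Φ(z,ξ) = z^{1/2} − 2πqβ·z/ξ − 2πα·q^λ·z^λ/ξ^λ for z, ξ > 0. Suppose x₀ : (T,∞) → (0,∞) (for some T > 0) satisfies, for all ξ > T, the critical-point equation x₀(ξ)^{1/2} = 4πqβ·x₀(ξ)/ξ + 4παλ·q^λ·(x₀(ξ)/ξ)^λ, and suppose there exists η > 0 such that x₀(ξ)/ξ = (4π/(β q_F))²·ξ + O(ξ^{1−η}) as ξ → ∞. Then, as ξ → ∞, (1/(2π))·Φ(x₀(ξ), ξ) = ξ/(q_F β) − (α/(β^{2λ} q_F^{λ}))·ξ^{λ} + o(ξ^{λ}). -/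
/-!
Put `A = 4πqβ`, `r = x₀/ξ²` and `s = √r`. The hypothesis on `x₀` gives `r → 1/A²`, so `s → 1/A`,
while the critical-point equation reads `s (1 - A s) = B r^λ ξ^(λ-1)` with `B = 4παλ q^λ`.
Completing the square in the first two terms of `Φ`,
`ξ s - (A/2) ξ s² = ξ/(2A) - (A/2) ξ (s - 1/A)²`, and the critical-point equation shows that
`ξ (s - 1/A)²` is `O(ξ^(2λ-1)) = o(ξ^λ)`. The remaining term of `Φ` is a multiple of `r^λ ξ^λ`, and
`r^λ → A^(-2λ)` gives the second term of the expansion.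
-/

open Filter Asymptotics

/-- `Φ(z,ξ) = z^{1/2} − 2πqβ z/ξ − 2πα q^λ z^λ/ξ^λ`. -/
noncomputable def Phi (q β α lam : ℝ) (z ξ : ℝ) : ℝ :=
  z ^ ((1 : ℝ) / 2) - 2 * Real.pi * q * β * z / ξ -
    2 * Real.pi * α * q ^ lam * z ^ lam / ξ ^ lam

/-- The approximation hypothesis on `x₀`, normalised: a power-saving error implies convergence of
`x₀/ξ²`. -/
lemma tendsto_ratio_of_isBigO {x : ℝ → ℝ} {c η : ℝ} (hη : 0 < η)
    (h : (fun ξ : ℝ => x ξ / ξ - c * ξ) =O[atTop] fun ξ : ℝ => ξ ^ (1 - η)) :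
    Tendsto (fun ξ : ℝ => x ξ / ξ / ξ) atTop (nhds c) := by
  have h1 : (fun ξ : ℝ => ξ ^ (1 - η)) =o[atTop] fun ξ : ℝ => ξ := by
    refine isLittleO_of_tendsto' ?_ ((tendsto_rpow_neg_atTop hη).congr' ?_)
    · filter_upwards [eventually_gt_atTop 0] with ξ hξ h0
      exact absurd h0 hξ.ne'
    · filter_upwards [eventually_gt_atTop 0] with ξ hξ
      rw [← Real.rpow_sub_one hξ.ne']
      ring_nf
  have h2 := (h.trans_isLittleO h1).tendsto_div_nhds_zero.add_const c
  rw [zero_add] at h2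
  refine h2.congr' ?_
  filter_upwards [eventually_gt_atTop 0] with ξ hξ
  field_simp
  ring

/-- The constant of the secondary term: `q^λ (1/A²)^λ = 1/(β^(2λ) q_F^λ)` for `A = 4πqβ`. -/
lemma secondary_constant (lam β q : ℝ) (hβ : 0 < β) (hq : 0 < q) :
    q ^ lam * ((1 / (4 * Real.pi * q * β)) ^ 2) ^ lam =
      1 / (β ^ (2 * lam) * ((4 * Real.pi) ^ 2 * q) ^ lam) := by
  have hpi := Real.pi_pos
  rw [Real.rpow_mul hβ.le, Real.rpow_two, ← Real.mul_rpow (by positivity) (by positivity),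
    ← Real.mul_rpow (by positivity) (by positivity), one_div (_ ^ lam),
    ← Real.inv_rpow (by positivity)]
  congr 1
  field_simp

/-- Asymptotic expansion of `Φ` at the critical point: if `0 < λ ≤ 1/2`, `β, q > 0`,
`q_F = (4π)² q`, and `x₀(ξ)` satisfies the critical-point equation
`x₀^{1/2} = 4πqβ x₀/ξ + 4παλ q^λ (x₀/ξ)^λ` for `ξ > T`, together with
`x₀(ξ)/ξ = (4π/(β q_F))² ξ + O(ξ^{1−η})` for some `η > 0`, then
`(1/2π) Φ(x₀(ξ), ξ) = ξ/(q_F β) − (α/(β^{2λ} q_F^λ)) ξ^λ + o(ξ^λ)` as `ξ → ∞`. -/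
theorem phi_asymptotic_expansion
    (lam α β q : ℝ) (hlam0 : 0 < lam) (hlam : lam ≤ 1 / 2)
    (hβ : 0 < β) (hq : 0 < q)
    (qF : ℝ) (hqF : qF = (4 * Real.pi) ^ 2 * q)
    (T : ℝ) (hT : 0 < T)
    (x₀ : ℝ → ℝ) (hx₀pos : ∀ ξ : ℝ, T < ξ → 0 < x₀ ξ)
    (hcrit : ∀ ξ : ℝ, T < ξ →
      x₀ ξ ^ ((1 : ℝ) / 2) =
        4 * Real.pi * q * β * (x₀ ξ / ξ) +
          4 * Real.pi * α * lam * q ^ lam * (x₀ ξ / ξ) ^ lam)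
    (hη : ∃ η : ℝ, 0 < η ∧
      (fun ξ : ℝ => x₀ ξ / ξ - (4 * Real.pi / (β * qF)) ^ 2 * ξ)
        =O[atTop] fun ξ : ℝ => ξ ^ (1 - η)) :
    (fun ξ : ℝ =>
        1 / (2 * Real.pi) * Phi q β α lam (x₀ ξ) ξ -
          (ξ / (qF * β) - α / (β ^ (2 * lam) * qF ^ lam) * ξ ^ lam))
      =o[atTop] fun ξ : ℝ => ξ ^ lam := by
  have hpi := Real.pi_pos
  obtain ⟨η, hη0, hO⟩ := hη
  subst hqF
  obtain ⟨A, hA⟩ : ∃ A, A = 4 * Real.pi * q * β := ⟨_, rfl⟩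
  have hA0 : 0 < A := by rw [hA]; positivity
  obtain ⟨B, hB⟩ : ∃ B, B = 4 * Real.pi * α * lam * q ^ lam := ⟨_, rfl⟩
  have hc : (4 * Real.pi / (β * ((4 * Real.pi) ^ 2 * q))) ^ 2 = (1 / A) ^ 2 := by
    rw [hA]; congr 1; field_simp
  rw [hc] at hO
  have hr := tendsto_ratio_of_isBigO hη0 hO
  have hs : Tendsto (fun ξ : ℝ => √(x₀ ξ / ξ / ξ)) atTop (nhds (1 / A)) := by
    have := hr.sqrt
    rwa [Real.sqrt_sq (by positivity)] at this
  have hrl : Tendsto (fun ξ : ℝ => (x₀ ξ / ξ / ξ) ^ lam) atTop (nhds (((1 / A) ^ 2) ^ lam)) :=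
    hr.rpow_const (Or.inr hlam0.le)
  have hpow : Tendsto (fun ξ : ℝ => ξ ^ (lam - 1)) atTop (nhds 0) := by
    have := tendsto_rpow_neg_atTop (show (0 : ℝ) < 1 - lam by linarith)
    simpa using this
  have hK : Tendsto (fun ξ : ℝ => B * (x₀ ξ / ξ / ξ) ^ lam / (A * √(x₀ ξ / ξ / ξ))) atTop
      (nhds (B * ((1 / A) ^ 2) ^ lam / (A * (1 / A)))) :=
    (hrl.const_mul B).div (hs.const_mul A) (by positivity)
  have hmain : Tendsto (fun ξ : ℝ =>
      -(A / (4 * Real.pi)) *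
          ((B * (x₀ ξ / ξ / ξ) ^ lam / (A * √(x₀ ξ / ξ / ξ))) ^ 2 * ξ ^ (lam - 1)) -
        α * q ^ lam * ((x₀ ξ / ξ / ξ) ^ lam - ((1 / A) ^ 2) ^ lam)) atTop (nhds 0) := by
    have h := (((hK.pow 2).mul hpow).const_mul (-(A / (4 * Real.pi)))).sub
      ((hrl.sub_const (((1 / A) ^ 2) ^ lam)).const_mul (α * q ^ lam))
    simpa using h
  refine isLittleO_of_tendsto' ?_ (hmain.congr' ?_)
  · filter_upwards [eventually_gt_atTop 0] with ξ hξ h0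
    exact absurd h0 (Real.rpow_pos_of_pos hξ lam).ne'
  filter_upwards [eventually_gt_atTop T] with ξ hξT
  have hξ : 0 < ξ := hT.trans hξT
  have hx := hx₀pos ξ hξT
  have hcr := hcrit ξ hξT
  have hsec := secondary_constant lam β q hβ hq
  rw [← hA] at hsec
  rw [← hA, ← hB] at hcr
  obtain ⟨s, hsdef⟩ : ∃ s, s = √(x₀ ξ / ξ / ξ) := ⟨_, rfl⟩
  have hs0 : 0 < s := by rw [hsdef]; positivity
  have hrs : x₀ ξ / ξ / ξ = s ^ 2 := by rw [hsdef, Real.sq_sqrt (by positivity)]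
  have hxs : x₀ ξ = (s * ξ) ^ 2 := by rw [mul_pow, ← hrs]; field_simp
  have hhalf : x₀ ξ ^ ((1 : ℝ) / 2) = s * ξ := by
    rw [← Real.sqrt_eq_rpow, hxs, Real.sqrt_sq (by positivity)]
  have hy : x₀ ξ / ξ = s ^ 2 * ξ := by rw [hxs]; field_simp
  have hyl : (x₀ ξ / ξ) ^ lam = (s ^ 2) ^ lam * ξ ^ lam := by
    rw [hy, Real.mul_rpow (by positivity) hξ.le]
  have hxl : x₀ ξ ^ lam / ξ ^ lam = (s ^ 2) ^ lam * ξ ^ lam := by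
    rw [← Real.div_rpow hx.le hξ.le, hyl]
  have hpm : ξ ^ (lam - 1) = ξ ^ lam / ξ := Real.rpow_sub_one hξ.ne' lam
  have hPhi : Phi q β α lam (x₀ ξ) ξ =
      s * ξ - A / 2 * (s ^ 2 * ξ) - 2 * Real.pi * α * q ^ lam * ((s ^ 2) ^ lam * ξ ^ lam) := by
    rw [Phi, hhalf, mul_div_assoc, mul_div_assoc, hxl, hy, hA]
    ring
  rw [hhalf, hyl, hy] at hcr
  have hconst : α / (β ^ (2 * lam) * ((4 * Real.pi) ^ 2 * q) ^ lam) =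
      α * q ^ lam * ((1 / A) ^ 2) ^ lam := by
    rw [mul_assoc, hsec]; ring
  have hlead : ξ / ((4 * Real.pi) ^ 2 * q * β) = ξ / (4 * Real.pi * A) := by
    rw [hA]; congr 1; ring
  rw [hPhi, hconst, hlead, ← hsdef, hrs, hpm]
  have hp : 0 < ξ ^ lam := Real.rpow_pos_of_pos hξ lam
  generalize ξ ^ lam = p at *
  generalize (s ^ 2) ^ lam = u at *
  generalize ((1 / A) ^ 2) ^ lam = v at *
  generalize q ^ lam = w at *
  -- The critical-point equation, solved for the deviation of `A s` from `1`.
  have hu : B * u = s * ξ * (1 - A * s) / p := by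
    rw [eq_div_iff hp.ne']; linear_combination -hcr
  rw [hu]
  field_simp
  ring
end
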